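/- For a point P and a line L of 𝒢(V), the following are equivalent: (i) P and L are neighboring; (ii) P is neighboring some point incident with L; (iii) L is neighboring some line through P. -/

import Mathlib

/-! Context: `K` a field, `V` a commutative, associative, unital 2-dimensional `K`-algebra in
which every element is a product of two elements; `V₀ = K·r ∪ K·s` is the set of non-units.
Points and lines of the geometry `𝒢(V)` are represented by triples in `V × V × V` with
trivial annihilator, up to multiplication by a unit. -/

/-- The triple `p` has trivial annihilator (so `V*p` is a point/line of `𝒢(V)`). -/
def TrivAnn {V : Type} [CommRing V] (p : V × V × V) : Prop :=
  ∀ v : V, v * p.1 = 0 → v * p.2.1 = 0 → v * p.2.2 = 0 → v = 0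

/-- The point (represented by) `p` is incident with the line (represented by) `L`. -/
def Incid {V : Type} [CommRing V] (p L : V × V × V) : Prop :=
  L.1 * p.1 + L.2.1 * p.2.1 + L.2.2 * p.2.2 = 0

/-- Two points (or two lines) are neighboring. -/
def Nbr {V : Type} [CommRing V] (p q : V × V × V) : Prop :=
  ∃ k l : V, (k, l) ≠ ((0 : V), (0 : V)) ∧
    (k * p.1, k * p.2.1, k * p.2.2) = (l * q.1, l * q.2.1, l * q.2.2)

/-- The point `p` and the line `L` are neighboring. -/
def NbrPL {V : Type} [CommRing V] (p L : V × V × V) : Prop :=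
  ¬ IsUnit (L.1 * p.1 + L.2.1 * p.2.1 + L.2.2 * p.2.2)

/-- `p` and `q` represent the same point (resp. line) of `𝒢(V)`. -/
def SameCls {V : Type} [CommRing V] (p q : V × V × V) : Prop :=
  ∃ u : V, IsUnit u ∧ (u * p.1, u * p.2.1, u * p.2.2) = q

/-- The standing hypotheses on the algebra `V` over `K`: it is `2`-dimensional, every element
is a product of two elements, and the set of non-units is `K·r ∪ K·s`. -/
def GoodAlg (K : Type) [Field K] (V : Type) [CommRing V] [Algebra K V] (r s : V) : Prop :=
  Module.finrank K V = 2 ∧ (∀ v : V, ∃ a b : V, v = a * b) ∧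
    (∀ v : V, ¬ IsUnit v ↔ ((∃ k : K, v = k • r) ∨ (∃ k : K, v = k • s)))

/-!
A triple over a Noetherian total ring of fractions has trivial annihilator iff it is unimodular,
i.e. nonzero modulo every maximal ideal. If `L·P` lies in a maximal ideal `m`, then `m` kills some
`k ≠ 0`, so every point `Q` congruent to `P` modulo `m` satisfies `k·Q = k·P`, and it suffices to
find such a `Q` on `L`. There are finitely many maximal ideals: prescribe `Q` to be `P` modulo `m`
and any nonzero vector orthogonal to `L` modulo the others, lift by the Chinese remainder theorem,
and subtract `(L·Q)W` where `L·W = 1`. This correction is invisible modulo every maximal ideal.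
Conversely, `k·P = l·Q` with `L·Q = 0` gives `k(L·P) = 0`, so `L·P` is not a unit.
-/

open scoped Matrix

section Unimodular

variable {R ι : Type*} [CommRing R]

/-- Unimodular vectors: the entries generate the unit ideal. They are the vectors representing
points and lines; over a general ring this is stronger than having trivial annihilator. -/
def IsUnimodular (v : ι → R) : Prop :=
  Ideal.span (Set.range v) = ⊤

theorem isUnimodular_iff_exists_dotProduct_eq_one [Fintype ι] {v : ι → R} :
    IsUnimodular v ↔ ∃ w : ι → R, w ⬝ᵥ v = 1 := by
  rw [IsUnimodular, Ideal.eq_top_iff_one, Ideal.mem_span_range_iff_exists_fun]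
  rfl

theorem isUnimodular_iff_forall_maximalSpectrum {v : ι → R} :
    IsUnimodular v ↔ ∀ m : MaximalSpectrum R, ∃ i, v i ∉ m.asIdeal := by
  constructor
  · intro hv m
    by_contra! hm
    exact m.isMaximal.ne_top (top_unique (hv ▸ Ideal.span_le.mpr (Set.range_subset_iff.mpr hm)))
  · intro hv
    by_contra hne
    obtain ⟨m, hm, hle⟩ := Ideal.exists_le_maximal _ hne
    obtain ⟨i, hi⟩ := hv ⟨m, hm⟩
    exact hi (hle (Ideal.subset_span ⟨i, rfl⟩))

theorem IsUnimodular.eq_zero_of_smul_eq_zero {v : ι → R} (hv : IsUnimodular v) {c : R}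
    (hc : c • v = 0) : c = 0 := by
  have hle : Ideal.span (Set.range v) ≤ LinearMap.ker (LinearMap.mulLeft R c) :=
    Ideal.span_le.mpr (Set.range_subset_iff.mpr (congrFun hc))
  rw [hv] at hle
  simpa using hle (Submodule.mem_top (x := 1))

theorem IsUnimodular.eq_zero_of_smul_eq_smul [Fintype ι] {a p q : ι → R} (hq : IsUnimodular q)
    (haq : a ⬝ᵥ q = 0) (hap : IsUnit (a ⬝ᵥ p)) {k l : R} (h : k • p = l • q) :
    k = 0 ∧ l = 0 := by
  have hk : k = 0 := hap.mul_left_eq_zero.mp <| by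
    rw [← smul_eq_mul, ← dotProduct_smul, h, dotProduct_smul, haq, smul_zero]
  refine ⟨hk, hq.eq_zero_of_smul_eq_zero ?_⟩
  rw [← h, hk, zero_smul]

theorem exists_dotProduct_eq_zero_and_apply_eq [Fintype ι] [Nontrivial ι] (a : ι → R) (i : ι) :
    ∃ v : ι → R, a ⬝ᵥ v = 0 ∧ ∃ j, v j = a i := by
  classical
  obtain ⟨j, hj⟩ := exists_ne i
  refine ⟨Pi.single j (a i) - Pi.single i (a j), ?_, j, by simp [hj]⟩
  rw [dotProduct_sub, dotProduct_single, dotProduct_single, mul_comm, sub_self]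

end Unimodular

section Semilocal

variable {R ι : Type*} [CommRing R] [Finite (MaximalSpectrum R)] [Fintype ι]

theorem IsUnimodular.exists_dotProduct_eq_zero_forall_sub_mem {a : ι → R} (ha : IsUnimodular a)
    {r : MaximalSpectrum R → ι → R} (hr : ∀ m, a ⬝ᵥ r m ∈ m.asIdeal) :
    ∃ q : ι → R, a ⬝ᵥ q = 0 ∧ ∀ (m : MaximalSpectrum R) (i : ι), q i - r m i ∈ m.asIdeal := by
  obtain ⟨w, hw⟩ := isUnimodular_iff_exists_dotProduct_eq_one.mp ha
  choose q hq using fun i ↦ Ideal.exists_forall_sub_mem_ideal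
    (fun _ _ hne ↦ MaximalSpectrum.isCoprime_of_ne hne) fun m : MaximalSpectrum R ↦ r m i
  have haq (m : MaximalSpectrum R) : a ⬝ᵥ q ∈ m.asIdeal := by
    have hsub : a ⬝ᵥ (q - r m) ∈ m.asIdeal :=
      Ideal.sum_mem _ fun i _ ↦ Ideal.mul_mem_left _ _ (hq i m)
    rw [dotProduct_sub] at hsub
    exact (Submodule.sub_mem_iff_left _ (hr m)).mp hsub
  refine ⟨q - (a ⬝ᵥ q) • w, ?_, fun m i ↦ ?_⟩
  · rw [dotProduct_sub, dotProduct_smul, dotProduct_comm a w, hw, smul_eq_mul, mul_one, sub_self]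
  · rw [Pi.sub_apply, sub_right_comm]
    exact Ideal.sub_mem _ (hq i m) (Ideal.mul_mem_right _ _ (haq m))

theorem IsUnimodular.exists_isUnimodular_dotProduct_eq_zero_forall_sub_mem [Nontrivial ι]
    {a p : ι → R} (ha : IsUnimodular a) (hp : IsUnimodular p) {m : MaximalSpectrum R}
    (hap : a ⬝ᵥ p ∈ m.asIdeal) :
    ∃ q : ι → R, IsUnimodular q ∧ a ⬝ᵥ q = 0 ∧ ∀ i, q i - p i ∈ m.asIdeal := by
  rw [isUnimodular_iff_forall_maximalSpectrum] at hp
  have hres (n : MaximalSpectrum R) :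
      ∃ v : ι → R, a ⬝ᵥ v ∈ n.asIdeal ∧ (∃ i, v i ∉ n.asIdeal) ∧ (n = m → v = p) := by
    by_cases hnm : n = m
    · exact ⟨p, hnm ▸ hap, hp n, fun _ ↦ rfl⟩
    · obtain ⟨i, hi⟩ := isUnimodular_iff_forall_maximalSpectrum.mp ha n
      obtain ⟨v, hav, j, hj⟩ := exists_dotProduct_eq_zero_and_apply_eq a i
      exact ⟨v, hav ▸ zero_mem _, ⟨j, hj ▸ hi⟩, fun h ↦ absurd h hnm⟩
  choose r har hr_notMem hrm using hres
  obtain ⟨q, haq, hq⟩ := ha.exists_dotProduct_eq_zero_forall_sub_mem har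
  refine ⟨q, isUnimodular_iff_forall_maximalSpectrum.mpr fun n ↦ ?_, haq, fun i ↦ ?_⟩
  · obtain ⟨i, hi⟩ := hr_notMem n
    exact ⟨i, fun hqi ↦ hi ((Submodule.sub_mem_iff_right _ hqi).mp (hq n i))⟩
  · exact hrm m rfl ▸ hq m i

end Semilocal

section TotalRingOfFractions

theorem isFractionRing_self_of_isArtinianRing (R : Type*) [CommRing R] [IsArtinianRing R] :
    IsFractionRing R R :=
  IsFractionRing.self_iff_nonZeroDivisors_le_isUnit.mpr fun _ ↦
    IsArtinianRing.isUnit_of_mem_nonZeroDivisors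

variable {R ι : Type*} [CommRing R] [IsNoetherianRing R] [IsFractionRing R R]

theorem exists_ne_zero_forall_mul_eq_zero_of_ne_top {I : Ideal R} (hI : I ≠ ⊤) :
    ∃ k : R, k ≠ 0 ∧ ∀ x ∈ I, k * x = 0 := by
  have hdisj : Disjoint (I : Set R) (nonZeroDivisors R) :=
    Set.disjoint_left.mpr fun x hxI hx ↦ hI <|
      I.eq_top_of_isUnit_mem hxI (IsFractionRing.self_iff_nonZeroDivisors_le_isUnit.mp ‹_› hx)
  obtain ⟨k, hk, hk0⟩ := (Submodule.ne_bot_iff _).mp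
    (Ideal.bot_lt_annihilator_of_disjoint_nonZeroDivisors hdisj).ne'
  exact ⟨k, hk0, Submodule.mem_annihilator.mp hk⟩

theorem isUnimodular_iff_forall_smul_eq_zero {v : ι → R} :
    IsUnimodular v ↔ ∀ c : R, c • v = 0 → c = 0 := by
  refine ⟨fun hv c ↦ hv.eq_zero_of_smul_eq_zero, fun hv ↦ ?_⟩
  by_contra hne
  obtain ⟨k, hk0, hk⟩ := exists_ne_zero_forall_mul_eq_zero_of_ne_top hne
  exact hk0 (hv k (funext fun i ↦ hk _ (Ideal.subset_span ⟨i, rfl⟩)))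

theorem IsUnimodular.exists_smul_eq_smul_of_not_isUnit [Fintype ι] [Nontrivial ι]
    {a p : ι → R} (ha : IsUnimodular a) (hp : IsUnimodular p) (hap : ¬ IsUnit (a ⬝ᵥ p)) :
    ∃ q : ι → R, IsUnimodular q ∧ a ⬝ᵥ q = 0 ∧ ∃ k : R, k ≠ 0 ∧ k • p = k • q := by
  obtain ⟨m, hm, hapm⟩ := exists_max_ideal_of_mem_nonunits hap
  obtain ⟨q, hq, haq, hqp⟩ :=
    ha.exists_isUnimodular_dotProduct_eq_zero_forall_sub_mem hp (m := ⟨m, hm⟩) hapm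
  obtain ⟨k, hk0, hk⟩ := exists_ne_zero_forall_mul_eq_zero_of_ne_top hm.ne_top
  refine ⟨q, hq, haq, k, hk0, funext fun i ↦ ?_⟩
  exact (sub_eq_zero.mp ((mul_sub k _ _).symm.trans (hk _ (hqp i)))).symm

theorem not_isUnit_dotProduct_iff_exists_smul_eq_smul [Fintype ι] [Nontrivial ι] {a p : ι → R}
    (ha : IsUnimodular a) (hp : IsUnimodular p) :
    ¬ IsUnit (a ⬝ᵥ p) ↔ ∃ q : ι → R, IsUnimodular q ∧ a ⬝ᵥ q = 0 ∧
      ∃ k l : R, (k, l) ≠ (0, 0) ∧ k • p = l • q := by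
  constructor
  · intro hap
    obtain ⟨q, hq, haq, k, hk0, hk⟩ := ha.exists_smul_eq_smul_of_not_isUnit hp hap
    exact ⟨q, hq, haq, k, k, fun h ↦ hk0 (congrArg Prod.fst h), hk⟩
  · rintro ⟨q, hq, haq, k, l, hkl, h⟩ hap
    obtain ⟨rfl, rfl⟩ := hq.eq_zero_of_smul_eq_smul haq hap h
    exact hkl rfl

end TotalRingOfFractions

section Triples

/-- Triples as vectors indexed by `Fin 3`, so that incidence becomes a dot product. -/
def tripleEquiv (V : Type*) : V × V × V ≃ (Fin 3 → V) where
  toFun p := ![p.1, p.2.1, p.2.2]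
  invFun v := (v 0, v 1, v 2)
  left_inv _ := rfl
  right_inv v := by ext i; fin_cases i <;> rfl

variable {V : Type} [CommRing V]

theorem tripleEquiv_dotProduct (p q : V × V × V) :
    tripleEquiv V p ⬝ᵥ tripleEquiv V q = p.1 * q.1 + p.2.1 * q.2.1 + p.2.2 * q.2.2 :=
  Matrix.vec3_dotProduct _ _

theorem smul_tripleEquiv (c : V) (p : V × V × V) :
    c • tripleEquiv V p = tripleEquiv V (c * p.1, c * p.2.1, c * p.2.2) :=
  Matrix.smul_vec3 _ _ _ _

theorem trivAnn_iff_isUnimodular [IsNoetherianRing V] [IsFractionRing V V] {p : V × V × V} :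
    TrivAnn p ↔ IsUnimodular (tripleEquiv V p) := by
  have hzero : (0 : Fin 3 → V) = tripleEquiv V 0 := by ext i; fin_cases i <;> rfl
  simp only [TrivAnn, isUnimodular_iff_forall_smul_eq_zero, smul_tripleEquiv, hzero,
    (tripleEquiv V).apply_eq_iff_eq, Prod.mk_eq_zero, and_imp]

theorem incid_iff_dotProduct_eq_zero {p L : V × V × V} :
    Incid p L ↔ tripleEquiv V L ⬝ᵥ tripleEquiv V p = 0 := by
  rw [Incid, tripleEquiv_dotProduct]

theorem nbr_iff_exists_smul_eq_smul {p q : V × V × V} :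
    Nbr p q ↔ ∃ k l : V, (k, l) ≠ (0, 0) ∧ k • tripleEquiv V p = l • tripleEquiv V q := by
  simp only [Nbr, smul_tripleEquiv, (tripleEquiv V).apply_eq_iff_eq]

theorem nbrPL_iff_not_isUnit_dotProduct {p L : V × V × V} :
    NbrPL p L ↔ ¬ IsUnit (tripleEquiv V L ⬝ᵥ tripleEquiv V p) := by
  rw [NbrPL, tripleEquiv_dotProduct]

theorem incid_comm {p L : V × V × V} : Incid p L ↔ Incid L p := by
  rw [incid_iff_dotProduct_eq_zero, dotProduct_comm, ← incid_iff_dotProduct_eq_zero]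

theorem nbrPL_comm {p L : V × V × V} : NbrPL p L ↔ NbrPL L p := by
  rw [nbrPL_iff_not_isUnit_dotProduct, dotProduct_comm, ← nbrPL_iff_not_isUnit_dotProduct]

variable [IsNoetherianRing V] [IsFractionRing V V]

theorem nbrPL_iff_exists_incid_nbr {P L : V × V × V} (hP : TrivAnn P) (hL : TrivAnn L) :
    NbrPL P L ↔ ∃ Q : V × V × V, TrivAnn Q ∧ Incid Q L ∧ Nbr P Q := by
  rw [trivAnn_iff_isUnimodular] at hP hL
  simp only [nbrPL_iff_not_isUnit_dotProduct, trivAnn_iff_isUnimodular,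
    incid_iff_dotProduct_eq_zero, nbr_iff_exists_smul_eq_smul,
    not_isUnit_dotProduct_iff_exists_smul_eq_smul hL hP, (tripleEquiv V).surjective.exists]

end Triples

theorem stmt6_general (V : Type) [CommRing V] [IsNoetherianRing V] [IsFractionRing V V]
    (P L : V × V × V) (hP : TrivAnn P) (hL : TrivAnn L) :
    (NbrPL P L ↔ ∃ Q : V × V × V, TrivAnn Q ∧ Incid Q L ∧ Nbr P Q) ∧
    (NbrPL P L ↔ ∃ M : V × V × V, TrivAnn M ∧ Incid P M ∧ Nbr L M) := by
  refine ⟨nbrPL_iff_exists_incid_nbr hP hL, ?_⟩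
  simp only [nbrPL_comm (p := P), incid_comm (p := P)]
  exact nbrPL_iff_exists_incid_nbr hL hP

/-- For a point `P` and a line `L` of `𝒢(V)` the following are equivalent:
(i) `P` and `L` are neighboring; (ii) `P` neighbors some point incident with `L`;
(iii) `L` neighbors some line through `P`. -/
theorem stmt6 (K : Type) [Field K] (V : Type) [CommRing V] [Algebra K V] (r s : V)
    (hV : GoodAlg K V r s)
    (P L : V × V × V) (hP : TrivAnn P) (hL : TrivAnn L) :
    (NbrPL P L ↔ ∃ Q : V × V × V, TrivAnn Q ∧ Incid Q L ∧ Nbr P Q) ∧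
    (NbrPL P L ↔ ∃ M : V × V × V, TrivAnn M ∧ Incid P M ∧ Nbr L M) := by
  have : Module.Finite K V := Module.finite_of_finrank_pos (hV.1 ▸ two_pos)
  have : IsArtinianRing V := IsArtinianRing.of_finite K V
  have : IsFractionRing V V := isFractionRing_self_of_isArtinianRing V
  exact stmt6_general V P L hP hL
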